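/- Let n ≥ r be positive integers. Suppose B ∈ ℂ^{n×r} factors as B = L·Σ·Rᴴ, where L ∈ ℂ^{n×r} is semi-unitary, R ∈ ℂ^{r×r} is unitary, and Σ ∈ ℂ^{r×r} is a diagonal matrix whose diagonal entries are nonnegative real numbers. Then U* := L·Rᴴ is semi-unitary, Re trace((U*)ᴴB) = trace(Σ), and for every semi-unitary matrix U ∈ ℂ^{n×r}, Re trace(UᴴB) ≤ trace(Σ); that is, U* = L·Rᴴ is a global maximizer of U ↦ Re trace(UᴴB) over the set of semi-unitary n×r matrices. -/

import Mathlib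

open Matrix

/-- The diagonal entries of `Vᴴ * W` have real part at most `1` when the columns of `V` and `W`
are orthonormal. -/
lemma re_conjTranspose_mul_apply_self_le_one {m k : Type*} [Fintype m] [DecidableEq k]
    {V W : Matrix m k ℂ} (hV : Vᴴ * V = 1) (hW : Wᴴ * W = 1) (i : k) :
    ((Vᴴ * W) i i).re ≤ 1 := by
  have hVi : ((Vᴴ * V) i i).re = 1 := by simp [hV]
  have hWi : ((Wᴴ * W) i i).re = 1 := by simp [hW]
  simp only [mul_apply, conjTranspose_apply, Complex.re_sum, Complex.mul_re, Complex.star_def,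
    Complex.conj_re, Complex.conj_im] at hVi hWi ⊢
  have hsum : 2 * ∑ j, ((V j i).re * (W j i).re - -(V j i).im * (W j i).im) ≤
      ∑ j, ((V j i).re * (V j i).re - -(V j i).im * (V j i).im) +
      ∑ j, ((W j i).re * (W j i).re - -(W j i).im * (W j i).im) := by
    rw [← Finset.sum_add_distrib, Finset.mul_sum]
    refine Finset.sum_le_sum fun j _ => ?_
    nlinarith [sq_nonneg ((V j i).re - (W j i).re), sq_nonneg ((V j i).im - (W j i).im)]
  linarith

/-- Right multiplication by a matrix with orthonormal columns preserves orthonormality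
of columns. -/
lemma conjTranspose_mul_self_mul_eq_one {m k l : Type*} [Fintype m] [Fintype k]
    [DecidableEq k] [DecidableEq l] {V : Matrix m k ℂ} {Q : Matrix k l ℂ}
    (hV : Vᴴ * V = 1) (hQ : Qᴴ * Q = 1) : (V * Q)ᴴ * (V * Q) = 1 := by
  rw [conjTranspose_mul, Matrix.mul_assoc, ← Matrix.mul_assoc Vᴴ, hV, Matrix.one_mul, hQ]

/-- If `B = L·Σ·Rᴴ` is a thin SVD (`L` semi-unitary `n×r`, `R` unitary `r×r`,
`Σ` diagonal with nonnegative real diagonal), then `U* = L·Rᴴ` is semi-unitary,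
`Re trace((U*)ᴴB) = trace Σ`, and `U*` maximizes `U ↦ Re trace(UᴴB)` over
semi-unitary matrices. -/
theorem svd_solves_semiunitary_trace_maximization
    (n r : ℕ) (hr : 0 < r) (hrn : r ≤ n)
    (B L : Matrix (Fin n) (Fin r) ℂ) (S R : Matrix (Fin r) (Fin r) ℂ)
    (hL : Lᴴ * L = 1) (hR : Rᴴ * R = 1 ∧ R * Rᴴ = 1)
    (hS : S.IsDiag) (hSdiag : ∀ i : Fin r, (S i i).im = 0 ∧ 0 ≤ (S i i).re)
    (hB : B = L * S * Rᴴ) :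
    (L * Rᴴ)ᴴ * (L * Rᴴ) = 1 ∧
    (Matrix.trace ((L * Rᴴ)ᴴ * B)).re = (Matrix.trace S).re ∧
    (∀ U : Matrix (Fin n) (Fin r) ℂ, Uᴴ * U = 1 →
      (Matrix.trace (Uᴴ * B)).re ≤ (Matrix.trace S).re) := by
  have htrace (U : Matrix (Fin n) (Fin r) ℂ) :
      trace (Uᴴ * B) = trace ((U * R)ᴴ * L * S) := by
    rw [hB, ← Matrix.mul_assoc, trace_mul_comm, conjTranspose_mul]
    simp only [Matrix.mul_assoc]
  refine ⟨conjTranspose_mul_self_mul_eq_one hL (by simpa using hR.2), ?_, fun U hU => ?_⟩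
  · rw [htrace, Matrix.mul_assoc L, hR.1, Matrix.mul_one, hL, Matrix.one_mul]
  · rw [htrace, ← hS.diagonal_diag]
    simp only [trace, diag_apply, mul_diagonal, diagonal_apply_eq, Complex.re_sum, Complex.mul_re]
    refine Finset.sum_le_sum fun i _ => ?_
    rw [(hSdiag i).1, mul_zero, sub_zero]
    exact mul_le_of_le_one_left (hSdiag i).2 <|
      re_conjTranspose_mul_apply_self_le_one (conjTranspose_mul_self_mul_eq_one hU hR.1) hL i
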